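/- In the tied braid monoid TB_n^B of type B, for all 1 ≤ i, j ≤ n with i ≠ j one has η_{i,j} φ_i = φ_i φ_j = φ_j η_{i,j}, where η_{i,j} is the generalized tie joining the i-th and j-th moving strands and φ_i, φ_j are the generalized ties joining the fixed strand to the i-th, respectively j-th, moving strand. -/

import Mathlib

/-! The tied braid monoid of type B, `TBₙᴮ`, presented by generators and relations. -/

/-- Generators of the tied braid monoid of type B on `n` (moving) strands:
`sig i` is `σ_{i+1}`, `sigInv i` is `σ_{i+1}⁻¹`, `rho` is `ρ₁`, `rhoInv` is `ρ₁⁻¹`,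
`phi` is `φ₁` and `eta i` is `η_{i+1}` (for `i : Fin (n-1)`). -/
inductive TBGen (n : ℕ) : Type
  | sig : Fin (n - 1) → TBGen n
  | sigInv : Fin (n - 1) → TBGen n
  | rho : TBGen n
  | rhoInv : TBGen n
  | phi : TBGen n
  | eta : Fin (n - 1) → TBGen n

namespace TiedBraidB

variable (n : ℕ)

/-- The word `σᵢ` (for `1 ≤ i ≤ n-1`; junk value `1` otherwise). -/
def wσ (i : ℕ) : FreeMonoid (TBGen n) :=
  if h : 1 ≤ i ∧ i ≤ n - 1 then FreeMonoid.of (TBGen.sig ⟨i - 1, by omega⟩) else 1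

/-- The word `σᵢ⁻¹`. -/
def wσi (i : ℕ) : FreeMonoid (TBGen n) :=
  if h : 1 ≤ i ∧ i ≤ n - 1 then FreeMonoid.of (TBGen.sigInv ⟨i - 1, by omega⟩) else 1

/-- The word `ηᵢ`. -/
def wη (i : ℕ) : FreeMonoid (TBGen n) :=
  if h : 1 ≤ i ∧ i ≤ n - 1 then FreeMonoid.of (TBGen.eta ⟨i - 1, by omega⟩) else 1

/-- The word `ρ₁`. -/
def wρ : FreeMonoid (TBGen n) := FreeMonoid.of TBGen.rho

/-- The word `ρ₁⁻¹`. -/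
def wρi : FreeMonoid (TBGen n) := FreeMonoid.of TBGen.rhoInv

/-- The word `φ₁`. -/
def wφ : FreeMonoid (TBGen n) := FreeMonoid.of TBGen.phi

/-- The descending word `σₖ σₖ₋₁ ⋯ σ₁`. -/
def wσDesc : ℕ → FreeMonoid (TBGen n)
  | 0 => 1
  | k + 1 => wσ n (k + 1) * wσDesc k

/-- The ascending word `σ₁ σ₂ ⋯ σₖ`. -/
def wσAsc : ℕ → FreeMonoid (TBGen n)
  | 0 => 1
  | k + 1 => wσAsc k * wσ n (k + 1)

/-- The descending word `σₖ⁻¹ σₖ₋₁⁻¹ ⋯ σ₁⁻¹`. -/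
def wσiDesc : ℕ → FreeMonoid (TBGen n)
  | 0 => 1
  | k + 1 => wσi n (k + 1) * wσiDesc k

/-- The ascending word `σ₁⁻¹ σ₂⁻¹ ⋯ σₖ⁻¹`. -/
def wσiAsc : ℕ → FreeMonoid (TBGen n)
  | 0 => 1
  | k + 1 => wσiAsc k * wσi n (k + 1)

/-- The defining relations of the tied braid monoid `TBₙᴮ` of type B. -/
inductive tbRel : FreeMonoid (TBGen n) → FreeMonoid (TBGen n) → Prop
  | sig_inv (i : ℕ) (h1 : 1 ≤ i) (h2 : i ≤ n - 1) :
      tbRel (wσ n i * wσi n i) 1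
  | inv_sig (i : ℕ) (h1 : 1 ≤ i) (h2 : i ≤ n - 1) :
      tbRel (wσi n i * wσ n i) 1
  | rho_inv : tbRel (wρ n * wρi n) 1
  | inv_rho : tbRel (wρi n * wρ n) 1
  | sig_comm (i j : ℕ) (h1 : 1 ≤ i) (h2 : i + 1 < j) (h3 : j ≤ n - 1) :
      tbRel (wσ n i * wσ n j) (wσ n j * wσ n i)
  | sig_braid (i : ℕ) (h1 : 1 ≤ i) (h2 : i + 1 ≤ n - 1) :
      tbRel (wσ n i * wσ n (i + 1) * wσ n i) (wσ n (i + 1) * wσ n i * wσ n (i + 1))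
  | rho_sig (i : ℕ) (h1 : 2 ≤ i) (h2 : i ≤ n - 1) :
      tbRel (wρ n * wσ n i) (wσ n i * wρ n)
  | rho_sig_rho_sig (h : 2 ≤ n) :
      tbRel (wρ n * wσ n 1 * wρ n * wσ n 1) (wσ n 1 * wρ n * wσ n 1 * wρ n)
  | eta_comm (i j : ℕ) (h1 : 1 ≤ i) (h2 : i ≤ n - 1) (h3 : 1 ≤ j) (h4 : j ≤ n - 1) :
      tbRel (wη n i * wη n j) (wη n j * wη n i)
  | eta_sig (i : ℕ) (h1 : 1 ≤ i) (h2 : i ≤ n - 1) :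
      tbRel (wη n i * wσ n i) (wσ n i * wη n i)
  | eta_sig_far (i j : ℕ) (h1 : 1 ≤ i) (h2 : i ≤ n - 1) (h3 : 1 ≤ j) (h4 : j ≤ n - 1)
      (h5 : i + 1 < j ∨ j + 1 < i) :
      tbRel (wη n i * wσ n j) (wσ n j * wη n i)
  | eta_sig_sig (i j : ℕ) (h1 : 1 ≤ i) (h2 : i ≤ n - 1) (h3 : 1 ≤ j) (h4 : j ≤ n - 1)
      (h5 : j = i + 1 ∨ i = j + 1) :
      tbRel (wη n i * wσ n j * wσ n i) (wσ n j * wσ n i * wη n j)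
  | eta_sig_sigInv (i j : ℕ) (h1 : 1 ≤ i) (h2 : i ≤ n - 1) (h3 : 1 ≤ j) (h4 : j ≤ n - 1)
      (h5 : j = i + 1 ∨ i = j + 1) :
      tbRel (wη n i * wσ n j * wσi n i) (wσ n j * wσi n i * wη n j)
  | eta_eta_sig (i j : ℕ) (h1 : 1 ≤ i) (h2 : i ≤ n - 1) (h3 : 1 ≤ j) (h4 : j ≤ n - 1)
      (h5 : j = i + 1 ∨ i = j + 1) :
      tbRel (wη n i * wη n j * wσ n i) (wσ n i * wη n i * wη n j)
  | eta_eta_sig' (i j : ℕ) (h1 : 1 ≤ i) (h2 : i ≤ n - 1) (h3 : 1 ≤ j) (h4 : j ≤ n - 1)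
      (h5 : j = i + 1 ∨ i = j + 1) :
      tbRel (wη n i * wη n j * wσ n i) (wη n j * wσ n i * wη n j)
  | eta_idem (i : ℕ) (h1 : 1 ≤ i) (h2 : i ≤ n - 1) :
      tbRel (wη n i * wη n i) (wη n i)
  | phi_idem : tbRel (wφ n * wφ n) (wφ n)
  | rho_eta (i : ℕ) (h1 : 1 ≤ i) (h2 : i ≤ n - 1) :
      tbRel (wρ n * wη n i) (wη n i * wρ n)
  | rho_phi : tbRel (wρ n * wφ n) (wφ n * wρ n)
  | phi_eta (i : ℕ) (h1 : 1 ≤ i) (h2 : i ≤ n - 1) :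
      tbRel (wφ n * wη n i) (wη n i * wφ n)
  | phi_sig (i : ℕ) (h1 : 2 ≤ i) (h2 : i ≤ n - 1) :
      tbRel (wφ n * wσ n i) (wσ n i * wφ n)
  | phi_move (i : ℕ) (h1 : 2 ≤ i) (h2 : i ≤ n) :
      tbRel (wσDesc n (i - 1) * wφ n * wσiAsc n (i - 1))
        (wσiDesc n (i - 1) * wφ n * wσAsc n (i - 1))
  | phi_eta_one (h : 2 ≤ n) :
      tbRel (wφ n * wη n 1) (wφ n * wσ n 1 * wφ n * wσi n 1)
  | phi_eta_one' (h : 2 ≤ n) :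
      tbRel (wφ n * wσ n 1 * wφ n * wσi n 1) (wσ n 1 * wφ n * wσi n 1 * wη n 1)

/-- The tied braid monoid of type B on `n` strands. -/
def TB : Type := (conGen (tbRel n)).Quotient

instance : Monoid (TB n) := inferInstanceAs (Monoid (conGen (tbRel n)).Quotient)

/-- The canonical projection from the free monoid on the generators onto `TBₙᴮ`. -/
def mk : FreeMonoid (TBGen n) →* TB n := Con.mk' _

/-- The generator `σᵢ` of `TBₙᴮ`. -/
def σB (i : ℕ) : TB n := mk n (wσ n i)

/-- The generator `σᵢ⁻¹` of `TBₙᴮ`. -/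
def σiB (i : ℕ) : TB n := mk n (wσi n i)

/-- The generator `ρ₁` of `TBₙᴮ`. -/
def ρB : TB n := mk n (wρ n)

/-- The generator `ρ₁⁻¹` of `TBₙᴮ`. -/
def ρiB : TB n := mk n (wρi n)

/-- The generator `φ₁` of `TBₙᴮ`. -/
def φB : TB n := mk n (wφ n)

/-- The generator `ηᵢ` of `TBₙᴮ`. -/
def ηB (i : ℕ) : TB n := mk n (wη n i)

/-- The word `σᵢ σᵢ₊₁ ⋯ σₖ` (empty if `k < i`). -/
def wσRange (i k : ℕ) : FreeMonoid (TBGen n) :=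
  ((List.range' i (k + 1 - i)).map (wσ n)).prod

/-- The word `σₖ⁻¹ σₖ₋₁⁻¹ ⋯ σᵢ⁻¹` (empty if `k < i`). -/
def wσiRangeRev (i k : ℕ) : FreeMonoid (TBGen n) :=
  ((List.range' i (k + 1 - i)).reverse.map (wσi n)).prod

/-- The word representing the generalized tie `η_{i,j}`:
`σᵢ ⋯ σ_{j-2} η_{j-1} σ_{j-2}⁻¹ ⋯ σᵢ⁻¹` for `i < j`, with the conventions
`η_{i,i} = 1` and `η_{j,i} = η_{i,j}`. -/
def wηg (i j : ℕ) : FreeMonoid (TBGen n) :=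
  if i = j then 1
  else wσRange n (min i j) (max i j - 2) * wη n (max i j - 1) *
    wσiRangeRev n (min i j) (max i j - 2)

/-- The word representing the generalized tie `φⱼ = σ_{j-1} ⋯ σ₁ φ₁ σ₁⁻¹ ⋯ σ_{j-1}⁻¹`. -/
def wφg (j : ℕ) : FreeMonoid (TBGen n) :=
  wσDesc n (j - 1) * wφ n * wσiAsc n (j - 1)

/-- The generalized tie `η_{i,j}` joining the `i`-th and `j`-th moving strands. -/
def ηg (i j : ℕ) : TB n := mk n (wηg n i j)

/-- The generalized tie `φⱼ` joining the fixed strand and the `j`-th moving strand. -/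
def φg (j : ℕ) : TB n := mk n (wφg n j)

end TiedBraidB

namespace TiedBraidB

theorem rel_eq {n : ℕ} {a b : FreeMonoid (TBGen n)} (h : tbRel n a b) : mk n a = mk n b :=
  (Con.eq _).2 (ConGen.Rel.of _ _ h)

theorem s_si {n i : ℕ} (h1 : 1 ≤ i) (h2 : i ≤ n - 1) : σB n i * σiB n i = 1 := by
  simpa [σB, σiB] using rel_eq (tbRel.sig_inv i h1 h2)

theorem si_s {n i : ℕ} (h1 : 1 ≤ i) (h2 : i ≤ n - 1) : σiB n i * σB n i = 1 := by
  simpa [σB, σiB] using rel_eq (tbRel.inv_sig i h1 h2)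

theorem s_comm {n i j : ℕ} (h1 : 1 ≤ i) (h2 : i + 1 < j) (h3 : j ≤ n - 1) :
    Commute (σB n i) (σB n j) := by
  simpa [σB, Commute, SemiconjBy] using rel_eq (tbRel.sig_comm i j h1 h2 h3)

theorem s_braid {n i : ℕ} (h1 : 1 ≤ i) (h2 : i + 1 ≤ n - 1) :
    σB n i * σB n (i + 1) * σB n i = σB n (i + 1) * σB n i * σB n (i + 1) := by
  simpa [σB] using rel_eq (tbRel.sig_braid i h1 h2)

/-- From `s x = y s` one gets `t y = x t` for the two-sided inverse `t` of `s`. -/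
theorem semi_inv {M : Type*} [Monoid M] {s t x y : M} (h1 : s * t = 1) (h2 : t * s = 1)
    (h : SemiconjBy s x y) : SemiconjBy t y x := by
  unfold SemiconjBy at *
  calc t * y = t * (y * s) * t := by rw [mul_assoc, mul_assoc, h1, mul_one]
    _ = (t * s) * x * t := by rw [← h]; simp only [mul_assoc]
    _ = x * t := by rw [h2, one_mul]

/-- If `x = s y t` then `s y = x s`. -/
theorem semi_of_eq {M : Type*} [Monoid M] {s t x y : M} (h2 : t * s = 1)
    (h : x = s * y * t) : SemiconjBy s y x := by
  unfold SemiconjBy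
  rw [h, mul_assoc, h2, mul_one]

theorem eq_of_semi {M : Type*} [Monoid M] {s t x y : M} (h1 : s * t = 1)
    (h : SemiconjBy s y x) : x = s * y * t := by
  rw [h.eq, mul_assoc, h1, mul_one]

/-- Cancellation: a semiconjugation is determined by its source. -/
theorem semi_unique {M : Type*} [Monoid M] {s t x y z : M} (h1 : s * t = 1)
    (h : SemiconjBy s y x) (h' : SemiconjBy s y z) : x = z := by
  rw [eq_of_semi h1 h, eq_of_semi h1 h']

theorem φg_one (n : ℕ) : φg n 1 = φB n := by
  simp [φg, wφg, wσDesc, wσiAsc, φB]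

theorem φg_succ (n k : ℕ) (hk : 1 ≤ k) : φg n (k + 1) = σB n k * φg n k * σiB n k := by
  obtain ⟨m, rfl⟩ : ∃ m, k = m + 1 := ⟨k - 1, by omega⟩
  simp [φg, wφg, wσDesc, wσiAsc, σB, σiB, mul_assoc]

theorem φg_alt (n k : ℕ) (hk : 1 ≤ k) (hn : k ≤ n) :
    φg n k = mk n (wσiDesc n (k - 1) * wφ n * wσAsc n (k - 1)) := by
  rcases Nat.lt_or_ge k 2 with h | h
  · obtain rfl : k = 1 := by omega
    simp [φg, wφg, wσDesc, wσiAsc, wσiDesc, wσAsc]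
  · exact rel_eq (tbRel.phi_move k h hn)

theorem φg_succ' (n k : ℕ) (hk : 1 ≤ k) (hn : k + 1 ≤ n) :
    φg n (k + 1) = σiB n k * φg n k * σB n k := by
  rw [φg_alt n (k + 1) (by omega) hn, φg_alt n k hk (by omega)]
  obtain ⟨m, rfl⟩ : ∃ m, k = m + 1 := ⟨k - 1, by omega⟩
  simp [wσiDesc, wσAsc, σB, σiB, mul_assoc]

/-- `σ_k φ_k = φ_{k+1} σ_k`. -/
theorem s_φ_up {n k : ℕ} (hk : 1 ≤ k) (hn : k ≤ n - 1) :
    SemiconjBy (σB n k) (φg n k) (φg n (k + 1)) :=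
  semi_of_eq (si_s hk hn) (φg_succ n k hk)

/-- `σ_k φ_{k+1} = φ_k σ_k`. -/
theorem s_φ_down {n k : ℕ} (hk : 1 ≤ k) (hn : k ≤ n - 1) :
    SemiconjBy (σB n k) (φg n (k + 1)) (φg n k) :=
  semi_inv (si_s hk hn) (s_si hk hn)
    (semi_of_eq (s_si hk hn) (φg_succ' n k hk (by omega)))

theorem s_φ_far {n j k : ℕ} (hj : 1 ≤ j) (hjk : j < k) (hn : k ≤ n - 1) :
    Commute (σB n k) (φg n j) := by
  induction j, hj using Nat.le_induction with
  | base =>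
    rw [φg_one]
    have := rel_eq (tbRel.phi_sig k (by omega) hn)
    simp only [map_mul] at this
    exact this.symm
  | succ j hj ih =>
    rw [φg_succ n j hj]
    have h := (s_comm hj hjk hn).symm
    have h' : Commute (σB n k) (σiB n j) :=
      (semi_inv (s_si hj (by omega)) (si_s hj (by omega)) h.symm : Commute _ _).symm
    exact (h.mul_right (ih (by omega))).mul_right h'

theorem s_φ_low {n j k : ℕ} (hk : 1 ≤ k) (hjk : k + 2 ≤ j) (hn : j ≤ n) :
    Commute (σB n k) (φg n j) := by
  induction j, hjk using Nat.le_induction with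
  | base =>
    have h1 := s_φ_up (n := n) hk (by omega)
    have h2 := s_φ_up (n := n) (k := k + 1) (by omega) (by omega)
    have h3 := s_φ_far (n := n) (j := k) (k := k + 1) hk (by omega) (by omega)
    have h4 : SemiconjBy (σB n (k + 1) * σB n k * σB n (k + 1)) (φg n k) (φg n (k + 2)) :=
      (h2.mul_left h1).mul_left h3
    rw [← s_braid hk (by omega), mul_assoc] at h4
    have h5 := semi_inv (s_si (n := n) (i := k) hk (by omega)) (si_s hk (by omega)) (s_φ_up hk (by omega))
    have h6 := semi_inv (s_si (n := n) (i := k + 1) (by omega) (by omega))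
      (si_s (by omega) (by omega)) h2
    have h7 := (h4.mul_left h5).mul_left h6
    have e : σB n k * (σB n (k + 1) * σB n k) * σiB n k * σiB n (k + 1) = σB n k := by
      simp only [mul_assoc]
      rw [← mul_assoc (σB n k) (σiB n k), s_si hk (by omega), one_mul,
        s_si (by omega) (by omega), mul_one]
    rw [e] at h7
    exact h7
  | succ j hj ih =>
    rw [φg_succ n j (by omega)]
    have h : Commute (σB n k) (σB n j) := s_comm hk (by omega) (by omega)
    have h' : Commute (σB n k) (σiB n j) :=
      (semi_inv (s_si (by omega) (by omega)) (si_s (by omega) (by omega)) h.symm :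
        Commute _ _).symm
    exact (h.mul_right (ih (by omega))).mul_right h'

/-- The full package of product identities for a triple `(η_{i,j}, φ_i, φ_j)`. -/
def Good {M : Type*} [Monoid M] (e a b : M) : Prop :=
  e * a = a * b ∧ a * b = b * e ∧ e * b = b * a ∧ b * a = a * e

theorem Good.conj {M : Type*} [Monoid M] {e a b e' a' b' s t : M} (h : Good e a b)
    (h1 : s * t = 1) (he : SemiconjBy s e e') (ha : SemiconjBy s a a')
    (hb : SemiconjBy s b b') : Good e' a' b' := by
  obtain ⟨p, q, r, u⟩ := h
  refine ⟨semi_unique h1 (he.mul_right ha) (p ▸ ha.mul_right hb),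
    semi_unique h1 (ha.mul_right hb) (q ▸ hb.mul_right he),
    semi_unique h1 (he.mul_right hb) (r ▸ hb.mul_right ha),
    semi_unique h1 (hb.mul_right ha) (u ▸ ha.mul_right he)⟩

theorem good_one {n : ℕ} (hn : 2 ≤ n) : Good (ηB n 1) (φg n 1) (φg n 2) := by
  have r1 := rel_eq (tbRel.phi_eta_one (n := n) hn)
  have r2 := rel_eq (tbRel.phi_eta_one' (n := n) hn)
  have r3 := rel_eq (tbRel.phi_eta (n := n) 1 le_rfl (by omega))
  have r4 := rel_eq (tbRel.eta_sig (n := n) 1 le_rfl (by omega))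
  simp only [map_mul] at r1 r2 r3 r4
  have e2 : φg n 2 = σB n 1 * φB n * σiB n 1 := by
    rw [φg_succ n 1 le_rfl, φg_one]
  have f1 : φg n 1 * ηB n 1 = φg n 1 * φg n 2 := by
    rw [e2, φg_one]; simpa only [mul_assoc, φB, ηB, σB, σiB] using r1
  have f2 : φg n 1 * φg n 2 = φg n 2 * ηB n 1 := by
    rw [e2, φg_one]; simpa only [mul_assoc, φB, ηB, σB, σiB] using r2
  have f3 : φg n 1 * ηB n 1 = ηB n 1 * φg n 1 := by
    rw [φg_one]; exact r3
  have hs : SemiconjBy (σB n 1) (ηB n 1) (ηB n 1) := r4.symm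
  have hu := s_φ_up (n := n) (k := 1) le_rfl (by omega)
  have hd := s_φ_down (n := n) (k := 1) le_rfl (by omega)
  have hst := s_si (n := n) (i := 1) le_rfl (by omega)
  have g1 : φg n 2 * ηB n 1 = φg n 2 * φg n 1 :=
    semi_unique hst (hu.mul_right hs) (f1 ▸ hu.mul_right hd)
  have g3 : φg n 2 * ηB n 1 = ηB n 1 * φg n 2 :=
    semi_unique hst (hu.mul_right hs) (f3 ▸ hs.mul_right hu)
  exact ⟨f3.symm.trans f1, f2, g3.symm.trans g1, g1.symm.trans (f2.symm.trans f1.symm)⟩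

theorem good_adj {n j : ℕ} (hj : 1 ≤ j) (hn : j + 1 ≤ n) :
    Good (ηB n j) (φg n j) (φg n (j + 1)) := by
  induction j, hj using Nat.le_induction with
  | base => exact good_one hn
  | succ j hj ih =>
    have r := rel_eq (tbRel.eta_sig_sig (n := n) (j + 1) j (by omega) (by omega) hj (by omega)
      (Or.inr rfl))
    simp only [map_mul] at r
    have he : SemiconjBy (σB n j * σB n (j + 1)) (ηB n j) (ηB n (j + 1)) := by
      unfold SemiconjBy
      simp only [mul_assoc] at r ⊢
      exact r.symm
    have hst : (σB n j * σB n (j + 1)) * (σiB n (j + 1) * σiB n j) = 1 := by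
      rw [mul_assoc, ← mul_assoc (σB n (j + 1)), s_si (by omega) (by omega), one_mul,
        s_si hj (by omega)]
    have ha : SemiconjBy (σB n j * σB n (j + 1)) (φg n j) (φg n (j + 1)) :=
      (s_φ_up hj (by omega)).mul_left (s_φ_far hj (by omega) (by omega))
    have hb : SemiconjBy (σB n j * σB n (j + 1)) (φg n (j + 1)) (φg n (j + 2)) :=
      SemiconjBy.mul_left (s_φ_low hj (by omega) (by omega) : Commute _ _)
        (s_φ_up (k := j + 1) (by omega) (by omega))
    exact (ih (by omega)).conj hst he ha hb

theorem ηg_adj (n i : ℕ) (hi : 1 ≤ i) : ηg n i (i + 1) = ηB n i := by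
  have : i - 1 + 1 - i = 0 := by omega
  simp [ηg, wηg, wσRange, wσiRangeRev, ηB, this]

theorem ηg_step (n i j : ℕ) (hij : i + 2 ≤ j) :
    ηg n i j = σB n i * ηg n (i + 1) j * σiB n i := by
  have h1 : j - 2 + 1 - i = (j - 2 + 1 - (i + 1)) + 1 := by omega
  have h2 : min i j = i := by omega
  have h3 : min (i + 1) j = i + 1 := by omega
  have h4 : max i j = j := by omega
  have h5 : max (i + 1) j = j := by omega
  have h6 : i ≠ j := by omega
  have h7 : i + 1 ≠ j := by omega
  simp only [ηg, wηg, wσRange, wσiRangeRev, h2, h3, h4, h5, if_neg h6, if_neg h7]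
  rw [h1, List.range'_succ]
  simp [σB, σiB, mul_assoc]

theorem ηg_symm (n i j : ℕ) : ηg n i j = ηg n j i := by
  simp only [ηg, wηg, min_comm i j, max_comm i j, eq_comm (a := i) (b := j)]

theorem good_gen (n d : ℕ) : ∀ i, 1 ≤ i → i + 1 + d ≤ n →
    Good (ηg n i (i + 1 + d)) (φg n i) (φg n (i + 1 + d)) := by
  induction d with
  | zero =>
    intro i hi hn
    rw [Nat.add_zero, ηg_adj n i hi]
    exact good_adj hi (by omega)
  | succ d ih =>
    intro i hi hn
    have h := ih (i + 1) (by omega) (by omega)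
    rw [show i + 1 + 1 + d = i + 1 + (d + 1) by omega] at h
    exact h.conj (s_si hi (by omega))
      (semi_of_eq (si_s hi (by omega)) (ηg_step n i _ (by omega)))
      (s_φ_down hi (by omega)) (s_φ_low hi (by omega) (by omega))

end TiedBraidB

open TiedBraidB in
/-- In `TBₙᴮ`, for all `1 ≤ i, j ≤ n` with `i ≠ j` one has
`η_{i,j} φᵢ = φᵢ φⱼ = φⱼ η_{i,j}`. -/
theorem tie_phi_products (n i j : ℕ) (hi1 : 1 ≤ i) (hi2 : i ≤ n)
    (hj1 : 1 ≤ j) (hj2 : j ≤ n) (hij : i ≠ j) :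
    ηg n i j * φg n i = φg n i * φg n j ∧
    φg n i * φg n j = φg n j * ηg n i j := by
  rcases Nat.lt_or_gt_of_ne hij with h | h
  · obtain ⟨d, rfl⟩ : ∃ d, j = i + 1 + d := ⟨j - i - 1, by omega⟩
    obtain ⟨p, q, -, -⟩ := good_gen n d i hi1 hj2
    exact ⟨p, q⟩
  · obtain ⟨d, rfl⟩ : ∃ d, i = j + 1 + d := ⟨i - j - 1, by omega⟩
    obtain ⟨-, -, p, q⟩ := good_gen n d j hj1 hi2
    rw [ηg_symm]
    exact ⟨p, q⟩
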